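/- arXiv:2502.17954 — 2 statements merged into one kernel-verified Lean document; each statement's English description precedes it below -/
import Mathlib

section
/- Let m, n ≥ 3 be integers and d = gcd(m, n). Then τ(V_m · V_n) = [m, n] · gcd(V_m, V_n) if (b is odd, a is even, and d is even) or (b is odd, a is odd, and 3 ∣ d) or (b is odd, a is even, d is odd, and ν_2(m) ≠ ν_2(n)); and τ(V_m · V_n) = 2·[m, n] · gcd(V_m, V_n) if (b is even) or (b is odd, a is odd, and 3 ∤ d) or (b is odd, a is even, d is odd, and ν_2(m) = ν_2(n)). -/
/-- The first Lucas sequence with parameters `(a, b)`: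
`U 0 = 0`, `U 1 = 1`, `U (k+2) = a * U (k+1) + b * U k`. -/
def U (a b : ℤ) : ℕ → ℤ
  | 0 => 0
  | 1 => 1
  | (k + 2) => a * U a b (k + 1) + b * U a b k

/-- The second Lucas sequence with parameters `(a, b)`:
`V 0 = 2`, `V 1 = a`, `V (k+2) = a * V (k+1) + b * V k`. -/
def V (a b : ℤ) : ℕ → ℤ
  | 0 => 2
  | 1 => a
  | (k + 2) => a * V a b (k + 1) + b * V a b k

/-- The order of appearance of `m` in the first Lucas sequence with parameters `(a, b)`:
the smallest positive integer `k` such that `m ∣ U a b k`. -/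
noncomputable def tau (a b : ℤ) (m : ℤ) : ℕ :=
  sInf {k : ℕ | 0 < k ∧ m ∣ U a b k}

/-- The pair `(a, b)` is nondegenerate: `b ≠ 0` and
`(a, b) ∉ {(±2, -1), (±1, -1), (0, ±1), (±1, 0)}`. -/
def Nondegenerate (a b : ℤ) : Prop :=
  b ≠ 0 ∧ (a, b) ∉ ({(2, -1), (-2, -1), (1, -1), (-1, -1),
    (0, 1), (0, -1), (1, 0), (-1, 0)} : Set (ℤ × ℤ))

/-!
Put `L = [m, n]`, `g = gcd(V m, V n)` and `ℓ = lcm(V m, V n)`, so that `V m * V n = ± g * ℓ`. As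
`τ(V m) = 2m` and `τ(V n) = 2n`, also `τ(ℓ) = 2L`; write `U (2L) = ℓ * c`. Since `U (k * t)` is
congruent to `t * U k * U (k + 1) ^ (t - 1)` modulo `U k ^ 2`, passing from `ℓ` to `g * ℓ`
multiplies the order of appearance by `g / gcd(g, c)`. The same congruence, applied to
`U (2m) = V m * U m` and to `U (2n) = V n * U n`, shows that a common divisor of `V m` and `V n`
divides `c` if and only if it divides both `U m * (L / m)` and `U n * (L / n)`. Because
`gcd(U m, V m) ∣ 2` and `L / m`, `L / n` are coprime, `gcd(g, c)` is `1` or `2`, and the parity of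
the Lucas sequences decides which.
-/

section Identities

variable (a b : ℤ)

lemma U_add_two (k : ℕ) : U a b (k + 2) = a * U a b (k + 1) + b * U a b k := rfl

lemma V_add_two (k : ℕ) : V a b (k + 2) = a * V a b (k + 1) + b * V a b k := rfl

lemma U_add (j k : ℕ) :
    U a b (j + k) = U a b j * (U a b (k + 1) - a * U a b k) + U a b (j + 1) * U a b k := by
  induction k using Nat.twoStepInduction with
  | zero => simp [U]
  | one => simp [U]
  | more k ih₀ ih₁ =>
    rw [← add_assoc, U_add_two, add_assoc j k 1, ih₀, ih₁, U_add_two a b (k + 1), U_add_two]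
    ring

lemma U_add_add_one (j k : ℕ) :
    U a b (j + k + 1) = U a b (j + 1) * U a b (k + 1) + b * U a b j * U a b k := by
  rw [add_assoc, U_add, U_add_two]
  ring

lemma V_eq (k : ℕ) : V a b k = 2 * U a b (k + 1) - a * U a b k := by
  induction k using Nat.twoStepInduction with
  | zero => simp [U, V]
  | one => simp [U, V]; ring
  | more k ih₀ ih₁ =>
    rw [V_add_two, ih₀, ih₁, U_add_two a b (k + 1), U_add_two]
    ring

lemma U_two_mul (k : ℕ) : U a b (2 * k) = V a b k * U a b k := by
  rw [two_mul, U_add, V_eq]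
  ring

-- For `a ≥ 1` and `a ^ 2 + 4 * b ≥ 1` both coefficients on the right are nonnegative, so this
-- compares `U` with `V` without separating cases by the sign of `b`.
lemma two_mul_V_sub_U_succ (k : ℕ) :
    2 * (V a b (k + 1) - U a b (k + 1)) =
      (a - 1) * (V a b k - U a b k) + (a ^ 2 + 4 * b - 1) * U a b k := by
  rw [V_eq, V_eq, U_add_two]
  ring

lemma U_dvd_U_mul (k t : ℕ) : U a b k ∣ U a b (k * t) := by
  induction t with
  | zero => simp [U]
  | succ t ih =>
    rw [mul_add_one, U_add]
    exact dvd_add (ih.mul_right _) (dvd_mul_left _ _)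

lemma V_dvd_U_two_mul_of_dvd {m k : ℕ} (h : m ∣ k) : V a b m ∣ U a b (2 * k) := by
  obtain ⟨t, rfl⟩ := h
  rw [← mul_assoc]
  exact (Dvd.intro _ (U_two_mul a b m).symm).trans (U_dvd_U_mul a b _ t)

lemma U_mul_add_one_modEq (k t : ℕ) :
    U a b (k * t + 1) ≡ U a b (k + 1) ^ t [ZMOD U a b k] := by
  induction t with
  | zero => simp [U]
  | succ t ih =>
    calc U a b (k * (t + 1) + 1)
        = U a b (k * t + 1) * U a b (k + 1) + b * U a b (k * t) * U a b k := by
          rw [mul_add_one, U_add_add_one]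
      _ ≡ U a b (k + 1) ^ t * U a b (k + 1) + 0 [ZMOD U a b k] :=
          (ih.mul_right _).add (Int.modEq_zero_iff_dvd.2 (dvd_mul_left _ _))
      _ = U a b (k + 1) ^ (t + 1) := by ring

lemma U_succ_mul_U_mul_modEq (k t : ℕ) :
    U a b (k + 1) * U a b (k * t) ≡ t * U a b k * U a b (k + 1) ^ t [ZMOD U a b k ^ 2] := by
  induction t with
  | zero => simp [U]
  | succ t ih =>
    have hsq : U a b k * U a b (k * t + 1) ≡ U a b k * U a b (k + 1) ^ t [ZMOD U a b k ^ 2] := by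
      rw [sq]
      exact (U_mul_add_one_modEq a b k t).mul_left'
    have hdvd : U a b k ^ 2 ∣ U a b (k * t) * U a b k := by
      rw [sq]
      exact mul_dvd_mul_right (U_dvd_U_mul a b k t) _
    calc U a b (k + 1) * U a b (k * (t + 1))
        = U a b (k + 1) * (U a b (k + 1) * U a b (k * t)) +
            U a b (k + 1) * (U a b k * U a b (k * t + 1)) +
            -(a * U a b (k + 1)) * (U a b (k * t) * U a b k) := by
          rw [mul_add_one, U_add a b (k * t)]
          ring
      _ ≡ U a b (k + 1) * (t * U a b k * U a b (k + 1) ^ t) +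
            U a b (k + 1) * (U a b k * U a b (k + 1) ^ t) + 0 [ZMOD U a b k ^ 2] :=
          ((ih.mul_left _).add (hsq.mul_left _)).add
            (Int.modEq_zero_iff_dvd.2 (hdvd.mul_left _))
      _ = (t + 1 : ℕ) * U a b k * U a b (k + 1) ^ (t + 1) := by
          push_cast
          ring

lemma two_dvd_V_iff (k : ℕ) : 2 ∣ V a b k ↔ 2 ∣ a ∨ 2 ∣ U a b k := by
  rw [V_eq, dvd_sub_right (dvd_mul_right _ _), Int.prime_two.dvd_mul]

lemma dvd_U_tau (M : ℤ) : M ∣ U a b (tau a b M) := by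
  rcases Nat.eq_zero_or_pos (tau a b M) with h | h
  · simp [h, U]
  · exact (Nat.sInf_mem (Nat.nonempty_of_pos_sInf h)).2

lemma tau_natAbs (M : ℤ) : tau a b M.natAbs = tau a b M := by
  simp only [tau, Int.natAbs_dvd]

end Identities

section Coprime

variable {a b : ℤ}

lemma isCoprime_U_succ_right (hab : IsCoprime a b) (k : ℕ) : IsCoprime (U a b (k + 1)) b := by
  induction k with
  | zero => exact isCoprime_one_left
  | succ k ih =>
    rw [U_add_two]
    exact (hab.mul_left ih).add_mul_left_left _

lemma isCoprime_U_U_succ (hab : IsCoprime a b) (k : ℕ) :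
    IsCoprime (U a b k) (U a b (k + 1)) := by
  induction k with
  | zero => exact isCoprime_one_right
  | succ k ih =>
    rw [U_add_two, add_comm (a * _)]
    exact ((isCoprime_U_succ_right hab k).mul_right ih.symm).add_mul_right_right a

lemma dvd_U_add_iff (hab : IsCoprime a b) {M : ℤ} {j : ℕ} (hj : M ∣ U a b j) (k : ℕ) :
    M ∣ U a b (j + k) ↔ M ∣ U a b k := by
  rw [U_add, dvd_add_right (hj.mul_right _)]
  have hcop : IsCoprime M (U a b (j + 1)) :=
    (isCoprime_U_U_succ hab j).of_isCoprime_of_dvd_left hj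
  exact ⟨hcop.dvd_of_dvd_mul_left, (·.mul_left _)⟩

lemma dvd_U_iff_tau_dvd (hab : IsCoprime a b) {M : ℤ} {k : ℕ} :
    M ∣ U a b k ↔ tau a b M ∣ k := by
  have hmul (t : ℕ) : M ∣ U a b (tau a b M * t) := (dvd_U_tau a b M).trans (U_dvd_U_mul a b _ t)
  refine ⟨fun hk => ?_, fun ⟨t, ht⟩ => ht ▸ hmul t⟩
  rcases Nat.eq_zero_or_pos k with rfl | hpos
  · exact dvd_zero _
  have htau : 0 < tau a b M := (Nat.sInf_mem (s := {k | 0 < k ∧ M ∣ U a b k}) ⟨k, hpos, hk⟩).1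
  have hmod : M ∣ U a b (k % tau a b M) := by
    rwa [← dvd_U_add_iff hab (hmul (k / tau a b M)), Nat.div_add_mod]
  by_contra hdvd
  have hle : tau a b M ≤ k % tau a b M := Nat.sInf_le ⟨Nat.emod_pos_of_not_dvd hdvd, hmod⟩
  exact hle.not_gt (Nat.mod_lt k htau)

lemma tau_eq_of_forall_dvd_U_iff (hab : IsCoprime a b) {M : ℤ} {T : ℕ}
    (h : ∀ k, M ∣ U a b k ↔ T ∣ k) : tau a b M = T :=
  Nat.dvd_right_iff_eq.1 fun k => (dvd_U_iff_tau_dvd hab).symm.trans (h k)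

lemma tau_lcm (hab : IsCoprime a b) (M N : ℤ) :
    tau a b (Int.lcm M N) = Nat.lcm (tau a b M) (tau a b N) :=
  tau_eq_of_forall_dvd_U_iff hab fun k => by
    rw [Int.coe_lcm_dvd_iff, dvd_U_iff_tau_dvd hab, dvd_U_iff_tau_dvd hab, Nat.lcm_dvd_iff]

lemma tau_eq_of_prime (hab : IsCoprime a b) {M : ℤ} {p : ℕ} (hp : p.Prime) (hM : ¬ IsUnit M)
    (h : M ∣ U a b p) : tau a b M = p := by
  refine (hp.eq_one_or_self_of_dvd _ ((dvd_U_iff_tau_dvd hab).1 h)).resolve_left fun h1 => hM ?_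
  have hdvd := dvd_U_tau a b M
  rw [h1] at hdvd
  exact isUnit_of_dvd_one hdvd

lemma mul_dvd_U_mul_iff (hab : IsCoprime a b) {k : ℕ} {M w q : ℤ} (hM : M ≠ 0)
    (hU : U a b k = M * w) (hq : q ∣ U a b k) (t : ℕ) :
    q * M ∣ U a b (k * t) ↔ q ∣ w * t := by
  have hMU : M ∣ U a b k := ⟨w, hU⟩
  have hcop : IsCoprime (q * M) (U a b (k + 1)) :=
    ((isCoprime_U_U_succ hab k).of_isCoprime_of_dvd_left hq).mul_left
      ((isCoprime_U_U_succ hab k).of_isCoprime_of_dvd_left hMU)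
  have hsq : q * M ∣ U a b k ^ 2 := sq (U a b k) ▸ mul_dvd_mul hq hMU
  calc q * M ∣ U a b (k * t)
      ↔ q * M ∣ U a b (k + 1) * U a b (k * t) :=
        ⟨(·.mul_left _), hcop.dvd_of_dvd_mul_left⟩
    _ ↔ q * M ∣ t * U a b k * U a b (k + 1) ^ t :=
        ((U_succ_mul_U_mul_modEq a b k t).of_dvd hsq).dvd_iff
    _ ↔ q * M ∣ t * U a b k :=
        ⟨hcop.pow_right.dvd_of_dvd_mul_right, (·.mul_right _)⟩
    _ ↔ q * M ∣ w * t * M := by rw [hU, show t * (M * w) = w * t * M by ring]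
    _ ↔ q ∣ w * t := mul_dvd_mul_iff_right hM

lemma tau_mul_mul_gcd (hab : IsCoprime a b) {M c q : ℤ} (hM : M ≠ 0)
    (hU : U a b (tau a b M) = M * c) (hq : q ∣ U a b (tau a b M)) :
    tau a b (q * M) * Int.gcd q c = tau a b M * q.natAbs := by
  obtain ⟨q', hq'⟩ : Int.gcd q c ∣ q.natAbs := Int.gcd_dvd_natAbs_left q c
  rcases Nat.eq_zero_or_pos (Int.gcd q c) with h0 | hpos
  · simp [h0, hq']
  suffices tau a b (q * M) = tau a b M * q' by rw [this, hq']; ring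
  have hmul (t : ℕ) : q * M ∣ U a b (tau a b M * t) ↔ q' ∣ t := by
    rw [mul_dvd_U_mul_iff hab hM hU hq, ← Int.dvd_gcd_mul_iff_dvd_mul, ← Int.natAbs_dvd, hq']
    norm_cast
    exact Nat.mul_dvd_mul_iff_left hpos
  refine tau_eq_of_forall_dvd_U_iff hab fun k => ⟨fun h => ?_, ?_⟩
  · obtain ⟨t, rfl⟩ := (dvd_U_iff_tau_dvd hab).1 ((dvd_mul_left M q).trans h)
    exact mul_dvd_mul_left _ ((hmul t).1 h)
  · rintro ⟨t, rfl⟩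
    rw [mul_assoc]
    exact (hmul _).2 (dvd_mul_right _ _)

lemma dvd_two_mul_of_dvd_V_of_dvd_U_mul (hab : IsCoprime a b) {k : ℕ} {r z : ℤ}
    (hV : r ∣ V a b k) (hU : r ∣ U a b k * z) : r ∣ 2 * z := by
  obtain ⟨u, v, huv⟩ := isCoprime_U_U_succ hab k
  have h : 2 * z = (2 * u + v * a) * (U a b k * z) + v * z * V a b k := by
    rw [V_eq]
    linear_combination -2 * z * huv
  rw [h]
  exact dvd_add (hU.mul_left _) (hV.mul_left _)

end Coprime

section Parity

variable {a b : ℤ}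

lemma two_dvd_U_iff_of_even (hab : IsCoprime a b) (ha : Even a) (k : ℕ) :
    2 ∣ U a b k ↔ 2 ∣ k := by
  have h : (2 : ℤ) ∣ U a b 2 := by simpa [U] using ha.two_dvd
  rw [dvd_U_iff_tau_dvd hab, tau_eq_of_prime hab Nat.prime_two Int.prime_two.not_isUnit h]

lemma two_dvd_U_iff_of_odd (hab : IsCoprime a b) (ha : Odd a) (hb : Odd b) (k : ℕ) :
    2 ∣ U a b k ↔ 3 ∣ k := by
  have h : (2 : ℤ) ∣ U a b 3 := by simpa [U] using ((ha.mul ha).add_odd hb).two_dvd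
  rw [dvd_U_iff_tau_dvd hab, tau_eq_of_prime hab Nat.prime_three Int.prime_two.not_isUnit h]

lemma not_two_dvd_V_of_even (hab : IsCoprime a b) (hb : Even b) {k : ℕ} (hk : 0 < k) :
    ¬ 2 ∣ V a b k := by
  obtain ⟨j, rfl⟩ := Nat.exists_eq_add_one.2 hk
  rw [two_dvd_V_iff]
  rintro (h | h)
  · exact Int.prime_two.not_isUnit (hab.isUnit_of_dvd' h hb.two_dvd)
  · exact Int.prime_two.not_isUnit ((isCoprime_U_succ_right hab j).isUnit_of_dvd' h hb.two_dvd)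

lemma even_lcm_iff_even_gcd_or_padicValNat_ne {m n : ℕ} (hm : m ≠ 0) (hn : n ≠ 0) :
    Even (Nat.lcm m n) ↔ Even (Nat.gcd m n) ∨ padicValNat 2 m ≠ padicValNat 2 n := by
  simp only [even_iff_two_dvd, Nat.prime_two.dvd_lcm, Nat.dvd_gcd_iff,
    dvd_iff_padicValNat_ne_zero hm, dvd_iff_padicValNat_ne_zero hn]
  lia

end Parity

section Growth

variable {a b : ℤ}

lemma U_nonneg_and_U_le_V (ha : 0 < a) (hΔ : 0 < a ^ 2 + 4 * b) (k : ℕ) :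
    0 ≤ U a b k ∧ U a b k ≤ V a b k := by
  induction k with
  | zero => simp [U, V]
  | succ k ih =>
    obtain ⟨hU, hV⟩ := ih
    have hnonneg : 0 ≤ U a b (k + 1) := by linarith [V_eq a b k, mul_nonneg ha.le hU]
    refine ⟨hnonneg, ?_⟩
    have h₁ : 0 ≤ (a - 1) * (V a b k - U a b k) := mul_nonneg (by lia) (by lia)
    have h₂ : 0 ≤ (a ^ 2 + 4 * b - 1) * U a b k := mul_nonneg (by lia) hU
    linarith [two_mul_V_sub_U_succ a b k]

lemma monotone_U (ha : 0 < a) (hΔ : 0 < a ^ 2 + 4 * b) : Monotone (U a b) :=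
  monotone_nat_of_le_succ fun k => by
    obtain ⟨hU, hV⟩ := U_nonneg_and_U_le_V ha hΔ k
    have h : 0 ≤ (a - 1) * U a b k := mul_nonneg (by lia) hU
    linarith [V_eq a b k]

lemma U_pos (ha : 0 < a) (hΔ : 0 < a ^ 2 + 4 * b) {k : ℕ} (hk : 0 < k) : 0 < U a b k :=
  one_pos.trans_le (monotone_U ha hΔ hk)

lemma U_lt_V_of_one_lt (ha : 1 < a) (hΔ : 0 < a ^ 2 + 4 * b) (k : ℕ) : U a b k < V a b k := by
  induction k with
  | zero => simp [U, V]
  | succ k ih =>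
    have h₁ : 0 < (a - 1) * (V a b k - U a b k) := mul_pos (by lia) (by lia)
    have h₂ : 0 ≤ (a ^ 2 + 4 * b - 1) * U a b k :=
      mul_nonneg (by lia) (U_nonneg_and_U_le_V (by lia) hΔ k).1
    linarith [two_mul_V_sub_U_succ a b k]

lemma U_lt_V (ha : 0 < a) (hΔ : 0 < a ^ 2 + 4 * b) (hb : b ≠ 0) {k : ℕ} (hk : 2 ≤ k) :
    U a b k < V a b k := by
  rcases (show 1 ≤ a from ha).eq_or_lt with rfl | ha1
  · obtain ⟨j, rfl⟩ := Nat.exists_eq_add_of_le' hk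
    have hpos : 0 < b * U 1 b (j + 1) := mul_pos (by lia) (U_pos ha hΔ j.succ_pos)
    linarith [two_mul_V_sub_U_succ 1 b (j + 1)]
  · exact U_lt_V_of_one_lt ha1 hΔ k

lemma V_pos (ha : 0 < a) (hΔ : 0 < a ^ 2 + 4 * b) (k : ℕ) : 0 < V a b k := by
  rcases Nat.eq_zero_or_pos k with rfl | hk
  · exact two_pos
  · exact (U_pos ha hΔ hk).trans_le (U_nonneg_and_U_le_V ha hΔ k).2

lemma tau_V (hab : IsCoprime a b) (ha : 0 < a) (hΔ : 0 < a ^ 2 + 4 * b) (hb : b ≠ 0) {m : ℕ}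
    (hm : 2 ≤ m) : tau a b (V a b m) = 2 * m := by
  have hdvd : tau a b (V a b m) ∣ 2 * m :=
    (dvd_U_iff_tau_dvd hab).1 (V_dvd_U_two_mul_of_dvd a b dvd_rfl)
  refine (Nat.eq_of_dvd_of_lt_two_mul (by lia) hdvd ?_).symm
  by_contra! hle
  have hpos : 0 < tau a b (V a b m) := Nat.pos_of_dvd_of_pos hdvd (by lia)
  have : V a b m ≤ U a b m := calc
    V a b m ≤ U a b (tau a b (V a b m)) := Int.le_of_dvd (U_pos ha hΔ hpos) (dvd_U_tau a b _)
    _ ≤ U a b m := monotone_U ha hΔ (by lia)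
  exact this.not_gt (U_lt_V ha hΔ hb hm)

end Growth

section Cofactor

/-- The cofactor `c` of `lcm (V m) (V n)` in `U (2 * lcm m n)`; the division is exact by
`lcm_mul_cofactor`. -/
def cofactor (a b : ℤ) (m n : ℕ) : ℤ :=
  U a b (2 * Nat.lcm m n) / Int.lcm (V a b m) (V a b n)

/-- The factor by which the order of appearance of `V m * V n` falls short of
`2 * lcm m n * gcd (V m) (V n)` (see `tau_V_mul_V_mul_tauDefect`), given as the common factor of
`gcd (V m) (V n)` and the cofactor `c`. -/
def tauDefect (a b : ℤ) (m n : ℕ) : ℕ :=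
  Int.gcd (Int.gcd (V a b m) (V a b n)) (cofactor a b m n)

lemma lcm_mul_cofactor (a b : ℤ) (m n : ℕ) :
    Int.lcm (V a b m) (V a b n) * cofactor a b m n = U a b (2 * Nat.lcm m n) :=
  Int.mul_ediv_cancel' <| Int.coe_lcm_dvd
    (V_dvd_U_two_mul_of_dvd a b (Nat.dvd_lcm_left m n))
    (V_dvd_U_two_mul_of_dvd a b (Nat.dvd_lcm_right m n))

lemma lcm_eq_left_mul_div_gcd (m n : ℕ) : Nat.lcm m n = m * (n / Nat.gcd m n) :=
  Nat.mul_div_assoc m (Nat.gcd_dvd_right m n)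

lemma lcm_eq_right_mul_div_gcd (m n : ℕ) : Nat.lcm m n = n * (m / Nat.gcd m n) := by
  rw [Nat.lcm_comm, Nat.gcd_comm, lcm_eq_left_mul_div_gcd]

variable {a b : ℤ} {m n : ℕ}

lemma mul_V_dvd_U_two_mul_mul_iff (hab : IsCoprime a b) (hVm : V a b m ≠ 0) {q : ℤ}
    (hq : q ∣ V a b m) (t : ℕ) : q * V a b m ∣ U a b (2 * (m * t)) ↔ q ∣ U a b m * t := by
  have hU := U_two_mul a b m
  rw [← mul_assoc]
  exact mul_dvd_U_mul_iff hab hVm hU (hq.trans ⟨_, hU⟩) t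

lemma dvd_cofactor_iff (hab : IsCoprime a b) (hVm : V a b m ≠ 0) (hVn : V a b n ≠ 0) {q : ℤ}
    (hqm : q ∣ V a b m) (hqn : q ∣ V a b n) :
    q ∣ cofactor a b m n ↔
      q ∣ U a b m * (n / Nat.gcd m n : ℕ) ∧ q ∣ U a b n * (m / Nat.gcd m n : ℕ) := by
  have hl : (Int.lcm (V a b m) (V a b n) : ℤ) ≠ 0 := mod_cast Int.lcm_ne_zero hVm hVn
  have hlcm : (Int.lcm (q * V a b m) (q * V a b n) : ℤ) =
      (q * Int.lcm (V a b m) (V a b n)).natAbs := by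
    rw [Int.lcm_mul_left, Int.natAbs_mul, Int.natAbs_natCast]
  rw [← mul_V_dvd_U_two_mul_mul_iff hab hVm hqm, ← mul_V_dvd_U_two_mul_mul_iff hab hVn hqn,
    ← lcm_eq_left_mul_div_gcd, ← lcm_eq_right_mul_div_gcd, ← Int.coe_lcm_dvd_iff, hlcm,
    Int.natAbs_dvd, ← lcm_mul_cofactor, mul_comm q, mul_dvd_mul_iff_left hl]

lemma tauDefect_dvd_two (hab : IsCoprime a b) (hm : 0 < m) (hVm : V a b m ≠ 0)
    (hVn : V a b n ≠ 0) : tauDefect a b m n ∣ 2 := by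
  obtain ⟨hg, hc⟩ := Int.dvd_coe_gcd_iff.1 (dvd_refl (tauDefect a b m n : ℤ))
  obtain ⟨hrm, hrn⟩ := Int.dvd_coe_gcd_iff.1 hg
  obtain ⟨hUm, hUn⟩ := (dvd_cofactor_iff hab hVm hVn hrm hrn).1 hc
  have hx := dvd_two_mul_of_dvd_V_of_dvd_U_mul hab hrm hUm
  have hy := dvd_two_mul_of_dvd_V_of_dvd_U_mul hab hrn hUn
  norm_cast at hx hy
  have hcop : Nat.Coprime (m / Nat.gcd m n) (n / Nat.gcd m n) :=
    Nat.coprime_div_gcd_div_gcd (Nat.gcd_pos_of_pos_left n hm)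
  simpa [Nat.gcd_mul_left, hcop.symm.gcd_eq_one] using Nat.dvd_gcd hx hy

lemma tau_V_mul_V_mul_tauDefect (hab : IsCoprime a b) (hVm : V a b m ≠ 0)
    (hVn : V a b n ≠ 0) (hτm : tau a b (V a b m) = 2 * m) (hτn : tau a b (V a b n) = 2 * n) :
    tau a b (V a b m * V a b n) * tauDefect a b m n =
      2 * Nat.lcm m n * Int.gcd (V a b m) (V a b n) := by
  have hl : (Int.lcm (V a b m) (V a b n) : ℤ) ≠ 0 := mod_cast Int.lcm_ne_zero hVm hVn
  have hτ : tau a b (Int.lcm (V a b m) (V a b n)) = 2 * Nat.lcm m n := by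
    rw [tau_lcm hab, hτm, hτn, Nat.lcm_mul_left]
  have hg : (Int.gcd (V a b m) (V a b n) : ℤ) ∣ U a b (2 * Nat.lcm m n) :=
    (Int.gcd_dvd_left _ _).trans (V_dvd_U_two_mul_of_dvd a b (Nat.dvd_lcm_left m n))
  rw [tauDefect, ← tau_natAbs, Int.natAbs_mul, ← Int.gcd_mul_lcm, Nat.cast_mul,
    tau_mul_mul_gcd hab hl (by rw [hτ, lcm_mul_cofactor]) (hτ ▸ hg), hτ, Int.natAbs_natCast]

lemma two_dvd_tauDefect_iff (hab : IsCoprime a b) (hVm : V a b m ≠ 0) (hVn : V a b n ≠ 0) :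
    2 ∣ tauDefect a b m n ↔
      (2 ∣ V a b m ∧ 2 ∣ V a b n) ∧ (2 ∣ U a b m ∨ 2 ∣ n / Nat.gcd m n) ∧
        (2 ∣ U a b n ∨ 2 ∣ m / Nat.gcd m n) := by
  have hcast (k : ℕ) : 2 ∣ k ↔ (2 : ℤ) ∣ k := by norm_cast
  simp only [tauDefect, hcast, Int.dvd_coe_gcd_iff, ← Int.prime_two.dvd_mul]
  exact and_congr_right fun h => dvd_cofactor_iff hab hVm hVn h.1 h.2

lemma not_two_dvd_tauDefect_of_even (hab : IsCoprime a b) (hm : 0 < m) (hb : Even b) :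
    ¬ 2 ∣ tauDefect a b m n := fun h =>
  not_two_dvd_V_of_even hab hb hm <|
    (Int.natCast_dvd_natCast.2 h).trans ((Int.gcd_dvd_left _ _).trans (Int.gcd_dvd_left _ _))

lemma two_dvd_tauDefect_iff_of_odd (hab : IsCoprime a b) (hVm : V a b m ≠ 0)
    (hVn : V a b n ≠ 0) (ha : Odd a) (hb : Odd b) :
    2 ∣ tauDefect a b m n ↔ 3 ∣ Nat.gcd m n := by
  have ha2 : ¬ 2 ∣ a := by rwa [← even_iff_two_dvd, Int.not_even_iff_odd]
  simp only [two_dvd_tauDefect_iff hab hVm hVn, two_dvd_V_iff, ha2,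
    two_dvd_U_iff_of_odd hab ha hb, Nat.dvd_gcd_iff]
  tauto

lemma two_dvd_tauDefect_iff_of_even (hab : IsCoprime a b) (hVm : V a b m ≠ 0)
    (hVn : V a b n ≠ 0) (ha : Even a) :
    2 ∣ tauDefect a b m n ↔ Even (Nat.lcm m n) := by
  simp only [two_dvd_tauDefect_iff hab hVm hVn, two_dvd_V_iff, ha.two_dvd,
    two_dvd_U_iff_of_even hab ha, ← Nat.prime_two.dvd_mul, ← lcm_eq_left_mul_div_gcd,
    ← lcm_eq_right_mul_div_gcd, even_iff_two_dvd, true_or, true_and, and_self]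

end Cofactor

theorem tau_V_mul_V_general {a b : ℤ} (hab : IsCoprime a b) {m n : ℕ} (hm : 0 < m) (hn : 0 < n)
    (hVm : V a b m ≠ 0) (hVn : V a b n ≠ 0)
    (hτm : tau a b (V a b m) = 2 * m) (hτn : tau a b (V a b n) = 2 * n) :
    ((Odd b ∧ Even a ∧ Even (Nat.gcd m n)) ∨
     (Odd b ∧ Odd a ∧ 3 ∣ Nat.gcd m n) ∨
     (Odd b ∧ Even a ∧ Odd (Nat.gcd m n) ∧ padicValNat 2 m ≠ padicValNat 2 n) →
      tau a b (V a b m * V a b n) = Nat.lcm m n * Int.gcd (V a b m) (V a b n)) ∧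
    (Even b ∨
     (Odd b ∧ Odd a ∧ ¬ (3 ∣ Nat.gcd m n)) ∨
     (Odd b ∧ Even a ∧ Odd (Nat.gcd m n) ∧ padicValNat 2 m = padicValNat 2 n) →
      tau a b (V a b m * V a b n) = 2 * Nat.lcm m n * Int.gcd (V a b m) (V a b n)) := by
  have hτ := tau_V_mul_V_mul_tauDefect hab hVm hVn hτm hτn
  have hdvd := tauDefect_dvd_two hab hm hVm hVn
  have hodd := two_dvd_tauDefect_iff_of_odd hab hVm hVn
  have heven := two_dvd_tauDefect_iff_of_even hab hVm hVn
  rw [even_lcm_iff_even_gcd_or_padicValNat_ne hm.ne' hn.ne'] at heven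
  constructor <;> intro h
  · have h2 : 2 ∣ tauDefect a b m n := by
      rcases h with ⟨-, ha, hd⟩ | ⟨hb, ha, hd⟩ | ⟨-, ha, -, hν⟩
      · exact (heven ha).2 (.inl hd)
      · exact (hodd ha hb).2 hd
      · exact (heven ha).2 (.inr hν)
    rw [Nat.dvd_antisymm hdvd h2] at hτ
    lia
  · have h2 : ¬ 2 ∣ tauDefect a b m n := by
      rcases h with hb | ⟨hb, ha, hd⟩ | ⟨-, ha, hd, hν⟩
      · exact not_two_dvd_tauDefect_of_even hab hm hb
      · exact (hodd ha hb).not.2 hd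
      · exact (heven ha).not.2 (by simp [hd, hν])
    rwa [((Nat.dvd_prime Nat.prime_two).1 hdvd).resolve_right fun h => h2 h.symm.dvd,
      mul_one] at hτ

theorem tau_V_mul_V (a b : ℤ) (hab : IsCoprime a b) (ha : 0 < a)
    (hΔ : 0 < a ^ 2 + 4 * b) (hnd : Nondegenerate a b)
    (m n : ℕ) (hm : 3 ≤ m) (hn : 3 ≤ n) :
    ((Odd b ∧ Even a ∧ Even (Nat.gcd m n)) ∨
     (Odd b ∧ Odd a ∧ 3 ∣ Nat.gcd m n) ∨
     (Odd b ∧ Even a ∧ Odd (Nat.gcd m n) ∧ padicValNat 2 m ≠ padicValNat 2 n) →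
      tau a b (V a b m * V a b n) = Nat.lcm m n * Int.gcd (V a b m) (V a b n)) ∧
    (Even b ∨
     (Odd b ∧ Odd a ∧ ¬ (3 ∣ Nat.gcd m n)) ∨
     (Odd b ∧ Even a ∧ Odd (Nat.gcd m n) ∧ padicValNat 2 m = padicValNat 2 n) →
      tau a b (V a b m * V a b n) = 2 * Nat.lcm m n * Int.gcd (V a b m) (V a b n)) := by
  exact tau_V_mul_V_general hab (by lia) (by lia) (V_pos ha hΔ m).ne' (V_pos ha hΔ n).ne'
    (tau_V hab ha hΔ hnd.1 (by lia)) (tau_V hab ha hΔ hnd.1 (by lia))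
end

section
/- Let n be a positive integer and p ≥ 3 a prime number. Then z(F_n · F_{n+p} · F_{n+2p}) equals: n(n+p)(n+2p) if p ∤ n and n is odd; n(n+p)(n+2p)/2 if p ∤ n and n is even; (n(n+p)(n+2p)/p²)·F_p² if p ∣ n and n is odd; and (n(n+p)(n+2p)/(2p²))·(F_p²·L_p / gcd(L_p, (n+p)/p)) if p ∣ n and n is even. -/
/-- The classical Lucas sequence: `L 0 = 2`, `L 1 = 1`, `L (k+2) = L (k+1) + L k`. -/
def lucas : ℕ → ℕ
  | 0 => 2
  | 1 => 1
  | (k + 2) => lucas (k + 1) + lucas k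

/-- The order of appearance of `m` in the Fibonacci sequence:
the smallest positive integer `k` such that `m ∣ fib k`. -/
noncomputable def z (m : ℕ) : ℕ :=
  sInf {k : ℕ | 0 < k ∧ m ∣ Nat.fib k}

/-!
The engine is lifting the exponent: if a prime `q` divides `F_d`, then
`v_q(F_{dj}) = v_q(F_d) + v_q(j)` whenever `d` is even or `j` is odd. Write `n = d m` and `p = d r`
with `d = gcd(n, p)`, and let `K` be the least common multiple of the indices `n`, `n + p`,
`n + 2p`. Any `k` with `F_n F_{n+p} F_{n+2p} ∣ F_k` is a multiple `K t`, and the divisibility is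
checked prime by prime.

For odd `n` the cofactors `m`, `m + r`, `m + 2r` are pairwise coprime. A prime not dividing `F_d`
divides at most one of the three factors and imposes nothing on `t`, while a prime dividing `F_d`
is counted three times on the left and once on the right, so that the condition is `F_d² ∣ t`.

For even `n = 2 d h` the outer indices are multiples of `2d`, with `F_{2d} = F_d L_d`. Primes
dividing `L_d` but not `F_d` now divide both outer factors, but not the middle one
`F_{d(2h + r)}`, whose index cofactor `2h + r` still contributes to the valuation of `F_{Kt}`.
This surplus is the divisor `gcd(L_d, (n + p)/d)`.
-/

lemma lucas_add_fib (n : ℕ) : lucas n + Nat.fib n = 2 * Nat.fib (n + 1) := by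
  induction n using Nat.twoStepInduction with
  | zero => simp [lucas]
  | one => simp [lucas]
  | more n ih₁ ih₂ =>
    rw [lucas, Nat.fib_add_two, Nat.fib_add_two (n := n + 1)]
    omega

lemma lucas_pos (n : ℕ) : 0 < lucas n := by
  have := lucas_add_fib n
  have := Nat.fib_le_fib_succ (n := n)
  have : 0 < Nat.fib (n + 1) := Nat.fib_pos.2 n.succ_pos
  omega

lemma fib_two_mul_eq_fib_mul_lucas (n : ℕ) : Nat.fib (2 * n) = Nat.fib n * lucas n := by
  rw [Nat.fib_two_mul, ← lucas_add_fib, Nat.add_sub_cancel]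

lemma factorization_fib_two_mul {n : ℕ} (hn : n ≠ 0) (q : ℕ) :
    (Nat.fib (2 * n)).factorization q =
      (Nat.fib n).factorization q + (lucas n).factorization q := by
  rw [fib_two_mul_eq_fib_mul_lucas, Nat.factorization_mul (by simp [hn]) (lucas_pos n).ne',
    Finsupp.add_apply]

lemma gcd_fib_lucas_dvd_two (n : ℕ) : Nat.gcd (Nat.fib n) (lucas n) ∣ 2 := by
  have hfib : Nat.gcd (Nat.fib n) (lucas n) ∣ Nat.fib n := Nat.gcd_dvd_left _ _
  have hdvd : Nat.gcd (Nat.fib n) (lucas n) ∣ 2 * Nat.fib (n + 1) :=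
    lucas_add_fib n ▸ dvd_add (Nat.gcd_dvd_right _ _) hfib
  exact (Nat.Coprime.of_dvd_left hfib (Nat.fib_coprime_fib_succ n)).dvd_of_dvd_mul_right hdvd

lemma coprime_fib_gcd_lucas_of_odd {v : ℕ} (n : ℕ) (hv : Odd v) :
    Nat.Coprime (Nat.fib n) (Nat.gcd (lucas n) v) := by
  rw [Nat.coprime_iff_gcd_eq_one, ← Nat.gcd_assoc]
  exact Nat.Coprime.of_dvd_left (gcd_fib_lucas_dvd_two n) (Nat.coprime_two_left.2 hv)

lemma fib_dvd_fib_iff {m n : ℕ} (hm : m ≠ 2) : Nat.fib m ∣ Nat.fib n ↔ m ∣ n := by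
  refine ⟨fun h => ?_, Nat.fib_dvd m n⟩
  have hfib : Nat.fib (Nat.gcd m n) = Nat.fib m := by rw [Nat.fib_gcd, Nat.gcd_eq_left h]
  rcases Nat.eq_zero_or_pos m with rfl | hm0
  · simpa using h
  have hpos : 0 < Nat.gcd m n := Nat.gcd_pos_of_pos_left n hm0
  have hle : Nat.gcd m n ≤ m := Nat.gcd_le_left n hm0
  suffices Nat.gcd m n = m from Nat.gcd_eq_left_iff_dvd.1 this
  by_contra hne
  have hlt : Nat.fib (max 2 (Nat.gcd m n)) < Nat.fib m :=
    (Nat.fib_lt_fib (le_max_left _ _)).2 (by omega)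
  exact (hfib ▸ Nat.fib_mono (le_max_right 2 (Nat.gcd m n))).not_gt hlt

/-- At `a = 2` the hypothesis on `a` says nothing, since `fib 2 = 1`; the even index `c` takes
over. -/
lemma dvd_of_fib_dvd_fib_of_even {a c k : ℕ} (hc : Even c) (hc2 : c ≠ 2)
    (hck : Nat.fib c ∣ Nat.fib k) (hak : Nat.fib a ∣ Nat.fib k) : a ∣ k := by
  rcases eq_or_ne a 2 with rfl | ha2
  · exact hc.two_dvd.trans ((fib_dvd_fib_iff hc2).1 hck)
  · exact (fib_dvd_fib_iff ha2).1 hak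

lemma four_dvd_fib_of_even {d : ℕ} (hd : Even d) (h : 2 ∣ Nat.fib d) : 4 ∣ Nat.fib d := by
  have h3 : 3 ∣ d := (fib_dvd_fib_iff (m := 3) (by norm_num)).1 h
  have h6 : 6 ∣ d := Nat.Coprime.mul_dvd_of_dvd_of_dvd (by norm_num : Nat.Coprime 2 3) hd.two_dvd h3
  exact Dvd.dvd.trans (by decide : 4 ∣ Nat.fib 6) (Nat.fib_dvd 6 d h6)

lemma fib_mul_add_one_modEq (d j : ℕ) :
    (Nat.fib (d * j + 1) : ℤ) ≡ Nat.fib (d + 1) ^ j [ZMOD Nat.fib d ^ 2] := by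
  induction j with
  | zero => simp [Int.ModEq.refl]
  | succ j ih =>
    have hfib : (Nat.fib (d * (j + 1) + 1) : ℤ) =
        Nat.fib (d * j) * Nat.fib d + Nat.fib (d * j + 1) * Nat.fib (d + 1) := by
      rw [mul_add_one, Nat.fib_add]
      push_cast
      rfl
    have hdvd : (Nat.fib d : ℤ) ^ 2 ∣ Nat.fib (d * j) * Nat.fib d := by
      rw [sq]
      exact mul_dvd_mul_right (Int.natCast_dvd_natCast.2 (Nat.fib_dvd _ _ (dvd_mul_right d j))) _
    simpa [hfib, pow_succ] using (Int.modEq_zero_iff_dvd.2 hdvd).add (ih.mul_right _)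

/-- `F_{d+1} - F_d` is `F_{d-1}`, so the right-hand side is a difference of `j`-th powers of two
integers which differ by `F_d`: lifting the exponent for integers applies to it. -/
lemma fib_mul_modEq (d j : ℕ) :
    (Nat.fib (d * j) : ℤ) ≡ Nat.fib (d + 1) ^ j - (Nat.fib (d + 1) - Nat.fib d) ^ j
      [ZMOD Nat.fib d ^ 3] := by
  induction j with
  | zero => simp [Int.ModEq.refl]
  | succ j ih =>
    have hfib : (Nat.fib (d * (j + 1)) : ℤ) =
        Nat.fib (d * j) * (Nat.fib (d + 1) - Nat.fib d) +
          Nat.fib (d * j + 1) * Nat.fib d := by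
      rcases d with - | d
      · simp
      · rw [mul_add_one, ← add_assoc, Nat.fib_add, Nat.fib_add_two]
        push_cast
        ring
    have hlin := (ih.mul_right (Nat.fib (d + 1) - Nat.fib d)).add
      ((fib_mul_add_one_modEq d j).mul_right' (c := (Nat.fib d : ℤ)))
    rw [hfib]
    convert hlin using 1
    ring

lemma emultiplicity_pow_sub_pow_of_four_dvd_or_odd {q j : ℕ} {x y : ℤ} (hq : q.Prime)
    (hxy : (q : ℤ) ∣ x - y) (hx : ¬ (q : ℤ) ∣ x) (h : q = 2 → 4 ∣ x - y ∨ Odd j) :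
    emultiplicity (q : ℤ) (x ^ j - y ^ j) = emultiplicity (q : ℤ) (x - y) + emultiplicity q j := by
  rcases hq.eq_two_or_odd' with rfl | hodd
  · rcases h rfl with h4 | hj
    · rw [← Int.natCast_emultiplicity]
      exact Int.two_pow_sub_pow' j h4 hx
    · have h2j : ¬ 2 ∣ j := hj.not_two_dvd_nat
      rw [emultiplicity_pow_sub_pow_of_prime (Nat.prime_iff_prime_int.1 hq) hxy hx
        (mod_cast h2j), emultiplicity_eq_zero.2 h2j, add_zero]
  · exact Int.emultiplicity_pow_sub_pow hq hodd hxy hx j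

lemma emultiplicity_fib_mul_of_not_sq_dvd {q d j : ℕ} (hq : q.Prime) (hqd : q ∣ Nat.fib d)
    (hdj : Even d ∨ Odd j) (hj : ¬ q ^ 2 ∣ j) :
    emultiplicity q (Nat.fib (d * j)) = emultiplicity q (Nat.fib d) + emultiplicity q j := by
  rcases eq_or_ne d 0 with rfl | hd
  · simp
  set x : ℤ := (Nat.fib (d + 1) : ℤ)
  set y : ℤ := (Nat.fib (d + 1) - Nat.fib d : ℤ)
  have hsub : x - y = Nat.fib d := sub_sub_cancel _ _
  have hqx : ¬ (q : ℤ) ∣ x := fun h => hq.one_lt.ne' <|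
    Nat.eq_one_of_dvd_coprimes (Nat.fib_coprime_fib_succ d) hqd (Int.natCast_dvd_natCast.1 h)
  have hpow : emultiplicity (q : ℤ) (x ^ j - y ^ j) =
      emultiplicity q (Nat.fib d) + emultiplicity q j := by
    rw [emultiplicity_pow_sub_pow_of_four_dvd_or_odd hq (by rw [hsub]; exact_mod_cast hqd) hqx ?_,
      hsub, Int.natCast_emultiplicity]
    rintro rfl
    rw [hsub]
    exact hdj.imp_left fun hd => mod_cast four_dvd_fib_of_even hd hqd
  have herror : 3 * emultiplicity q (Nat.fib d) ≤
      emultiplicity (q : ℤ) (Nat.fib (d * j) - (x ^ j - y ^ j)) := by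
    have hle := emultiplicity_le_emultiplicity_of_dvd_right (a := (q : ℤ))
      (fib_mul_modEq d j).symm.dvd
    rwa [emultiplicity_pow (Nat.prime_iff_prime_int.1 hq), Int.natCast_emultiplicity,
      Nat.cast_ofNat] at hle
  -- This is where `q ^ 2 ∤ j` enters: the congruence modulo `F_d ^ 3` sees only valuations below
  -- three times that of `F_d`. Larger powers of `q` are reached one prime factor of `j` at a time.
  have hlt : emultiplicity q (Nat.fib d) + emultiplicity q j < 3 * emultiplicity q (Nat.fib d) := by
    have hfin : FiniteMultiplicity q (Nat.fib d) :=
      Nat.finiteMultiplicity_iff.2 ⟨hq.ne_one, by simpa [Nat.pos_iff_ne_zero] using hd⟩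
    have hpos : emultiplicity q (Nat.fib d) ≠ 0 := emultiplicity_ne_zero.2 hqd
    have hj2 : emultiplicity q j < (2 : ℕ) := emultiplicity_lt_iff_not_dvd.2 hj
    lift emultiplicity q (Nat.fib d) to ℕ using finiteMultiplicity_iff_emultiplicity_ne_top.1 hfin
      with v
    lift emultiplicity q j to ℕ using hj2.ne_top with w
    norm_cast at *
    omega
  have := emultiplicity_add_of_gt ((hpow.trans_lt hlt).trans_le herror)
  rwa [sub_add_cancel, hpow, Int.natCast_emultiplicity] at this

lemma emultiplicity_fib_mul {q d j : ℕ} (hq : q.Prime) (hqd : q ∣ Nat.fib d)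
    (hdj : Even d ∨ Odd j) :
    emultiplicity q (Nat.fib (d * j)) = emultiplicity q (Nat.fib d) + emultiplicity q j := by
  induction j using induction_on_primes with
  | zero => simp
  | one => simp [emultiplicity_eq_zero.2 hq.not_dvd_one]
  | prime_mul l j hl ih =>
    have hql : ¬ q ^ 2 ∣ l := fun h => hq.one_lt.ne' <|
      Nat.isUnit_iff.1 (hl.prime.irreducible.squarefree q (sq q ▸ h))
    have hdj' : Even (d * j) ∨ Odd l := hdj.imp (·.mul_right j) fun h => (Nat.odd_mul.1 h).1
    rw [mul_comm l, ← mul_assoc, emultiplicity_fib_mul_of_not_sq_dvd hq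
      (hqd.trans (Nat.fib_dvd _ _ (dvd_mul_right d j))) hdj' hql,
      ih (hdj.imp_right fun h => (Nat.odd_mul.1 h).2), emultiplicity_mul hq.prime, add_assoc]

lemma factorization_fib_mul {q d j : ℕ} (hq : q.Prime) (hqd : q ∣ Nat.fib d) (hd : d ≠ 0)
    (hj : j ≠ 0) (hdj : Even d ∨ Odd j) :
    (Nat.fib (d * j)).factorization q = (Nat.fib d).factorization q + j.factorization q := by
  have : Fact q.Prime := ⟨hq⟩
  have h := emultiplicity_fib_mul hq hqd hdj
  rw [← padicValNat_eq_emultiplicity (by simp [hd, hj]),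
    ← padicValNat_eq_emultiplicity (by simp [hd]), ← padicValNat_eq_emultiplicity hj] at h
  simp only [Nat.factorization_def _ hq]
  exact_mod_cast h

/-- For odd `d` and even `j` the formula of `factorization_fib_mul` fails at `q = 2`; this one is
its instance for `2 * d` and `j / 2`, with `v_q(2)` moved to the left to avoid a subtraction. -/
lemma factorization_fib_mul_add_factorization_two {q d j : ℕ} (hq : q.Prime)
    (hqd : q ∣ Nat.fib d) (hd : d ≠ 0) (hj : j ≠ 0) (hj2 : Even j) :
    (Nat.fib (d * j)).factorization q + Nat.factorization 2 q =
      (Nat.fib (2 * d)).factorization q + j.factorization q := by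
  obtain ⟨i, rfl⟩ := hj2.two_dvd
  have hi : i ≠ 0 := by simpa using hj
  rw [show d * (2 * i) = 2 * d * i by ring, factorization_fib_mul hq
    (hqd.trans (Nat.fib_dvd _ _ (dvd_mul_left d 2))) (by simp [hd]) hi (.inl (even_two_mul d)),
    Nat.factorization_mul two_ne_zero hi, Finsupp.add_apply]
  ring

lemma factorization_mul_mul_le_of_not_dvd_gcd {q a b c m : ℕ} (hm : m ≠ 0)
    (ha : a ∣ m) (hb : b ∣ m) (hc : c ∣ m) (hab : ¬ q ∣ Nat.gcd a b)
    (hac : ¬ q ∣ Nat.gcd a c) (hbc : ¬ q ∣ Nat.gcd b c) :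
    (a * b * c).factorization q ≤ m.factorization q := by
  have hne {x : ℕ} (hx : x ∣ m) : x ≠ 0 := ne_zero_of_dvd_ne_zero hm hx
  have hle {x : ℕ} (hx : x ∣ m) : x.factorization q ≤ m.factorization q :=
    (Nat.factorization_le_iff_dvd (hne hx) hm).2 hx q
  have hzero {x y : ℕ} (h : ¬ q ∣ Nat.gcd x y) : x.factorization q = 0 ∨ y.factorization q = 0 := by
    rw [Nat.dvd_gcd_iff, not_and_or] at h
    exact h.imp Nat.factorization_eq_zero_of_not_dvd Nat.factorization_eq_zero_of_not_dvd
  rw [Nat.factorization_mul (mul_ne_zero (hne ha) (hne hb)) (hne hc),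
    Nat.factorization_mul (hne ha) (hne hb), Finsupp.add_apply, Finsupp.add_apply]
  have := hle ha
  have := hle hb
  have := hle hc
  have := hzero hab
  have := hzero hac
  have := hzero hbc
  omega

lemma mul_mul_dvd_of_coprime {d u v k : ℕ} (huv : Nat.Coprime u v) (hu : d * u ∣ k)
    (hv : d * v ∣ k) : d * (u * v) ∣ k := by
  rw [← huv.lcm_eq_mul, ← Nat.lcm_mul_left]
  exact Nat.lcm_dvd hu hv

lemma z_eq_of_dvd_fib_iff {N C : ℕ} (hC : 0 < C) (h : ∀ k, 0 < k → (N ∣ Nat.fib k ↔ C ∣ k)) :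
    z N = C := by
  have hleast : IsLeast {k : ℕ | 0 < k ∧ N ∣ Nat.fib k} C :=
    ⟨⟨hC, (h C hC).2 dvd_rfl⟩, fun k ⟨hk, hN⟩ => Nat.le_of_dvd hk ((h k hk).1 hN)⟩
  exact hleast.csInf_eq

lemma z_eq_mul_of_factorization_le_iff {N K D : ℕ} (hN : N ≠ 0) (hK : K ≠ 0) (hD : D ≠ 0)
    (hdvd : ∀ k, N ∣ Nat.fib k → K ∣ k)
    (hfac : ∀ t q, t ≠ 0 → q.Prime →
      (N.factorization q ≤ (Nat.fib (K * t)).factorization q ↔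
        D.factorization q ≤ t.factorization q)) :
    z N = K * D := by
  have hiff {t : ℕ} (ht : t ≠ 0) : N ∣ Nat.fib (K * t) ↔ D ∣ t := by
    rw [← Nat.factorization_prime_le_iff_dvd hN (by simp [hK, ht]),
      ← Nat.factorization_prime_le_iff_dvd hD ht]
    exact forall₂_congr fun q hq => hfac t q ht hq
  refine z_eq_of_dvd_fib_iff (Nat.mul_pos hK.bot_lt hD.bot_lt) fun k hk => ?_
  by_cases hKk : K ∣ k
  · obtain ⟨t, rfl⟩ := hKk
    rw [hiff (Nat.pos_of_mul_pos_left hk).ne', Nat.mul_dvd_mul_iff_left hK.bot_lt]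
  · exact iff_of_false (fun h => hKk (hdvd k h)) fun h => hKk (dvd_of_mul_right_dvd h)

lemma gcd_fib_mul_fib_mul_of_coprime (d : ℕ) {x y : ℕ} (hxy : Nat.Coprime x y) :
    Nat.gcd (Nat.fib (d * x)) (Nat.fib (d * y)) = Nat.fib d := by
  rw [← Nat.fib_gcd, Nat.gcd_mul_left, hxy.gcd_eq_one, mul_one]

lemma factorization_fib_mul_fib_mul_fib_le_iff_of_even {q d u v w t : ℕ} (hq : q.Prime)
    (hd : d ≠ 0) (hv : v ≠ 0) (ht : t ≠ 0) (huv : Nat.Coprime u v) (huw : Nat.Coprime u w)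
    (hvw : Nat.Coprime v w) (hv2 : Even v) :
    (Nat.fib (d * u) * Nat.fib (d * v) * Nat.fib (d * w)).factorization q ≤
        (Nat.fib (d * (u * v * w) * t)).factorization q ↔
      (Nat.fib d ^ 2).factorization q ≤ t.factorization q := by
  have hu2 : Odd u := Nat.coprime_two_right.1 (huv.of_dvd_right hv2.two_dvd)
  have hw2 : Odd w := Nat.coprime_two_left.1 (hvw.of_dvd_left hv2.two_dvd)
  have hu : u ≠ 0 := hu2.pos.ne'
  have hw : w ≠ 0 := hw2.pos.ne'
  rw [mul_assoc d, Nat.factorization_pow, Finsupp.smul_apply, smul_eq_mul]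
  by_cases hqd : q ∣ Nat.fib d
  · have hfu := factorization_fib_mul hq hqd hd hu (.inr hu2)
    have hfw := factorization_fib_mul hq hqd hd hw (.inr hw2)
    have hfv := factorization_fib_mul_add_factorization_two hq hqd hd hv hv2
    have hfk := factorization_fib_mul_add_factorization_two (j := u * v * w * t) hq hqd hd
      (by simp [*]) (((hv2.mul_left u).mul_right w).mul_right t)
    simp only [Nat.factorization_mul, ne_eq, mul_eq_zero, Nat.fib_eq_zero, Finsupp.add_apply,
      hd, hu, hv, hw, ht, or_self, not_false_eq_true] at hfk ⊢
    omega
  · rw [Nat.factorization_eq_zero_of_not_dvd hqd, mul_zero]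
    exact iff_of_true (factorization_mul_mul_le_of_not_dvd_gcd (by simp [*])
      (Nat.fib_dvd _ _ (mul_dvd_mul_left d ⟨v * w * t, by ring⟩))
      (Nat.fib_dvd _ _ (mul_dvd_mul_left d ⟨u * w * t, by ring⟩))
      (Nat.fib_dvd _ _ (mul_dvd_mul_left d ⟨u * v * t, by ring⟩))
      (by rwa [gcd_fib_mul_fib_mul_of_coprime d huv])
      (by rwa [gcd_fib_mul_fib_mul_of_coprime d huw])
      (by rwa [gcd_fib_mul_fib_mul_of_coprime d hvw])) (Nat.zero_le _)

theorem z_fib_mul_fib_mul_fib_of_even {d u v w : ℕ} (hd : d ≠ 0) (hv : v ≠ 0)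
    (huv : Nat.Coprime u v) (huw : Nat.Coprime u w) (hvw : Nat.Coprime v w)
    (hv2 : Even v) (hdv : d * v ≠ 2) :
    z (Nat.fib (d * u) * Nat.fib (d * v) * Nat.fib (d * w)) =
      d * (u * v * w) * Nat.fib d ^ 2 := by
  have hu : u ≠ 0 := (Nat.coprime_two_right.1 (huv.of_dvd_right hv2.two_dvd)).pos.ne'
  have hw : w ≠ 0 := (Nat.coprime_two_left.1 (hvw.of_dvd_left hv2.two_dvd)).pos.ne'
  refine z_eq_mul_of_factorization_le_iff (by simp [*]) (by simp [*]) (by simp [hd])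
    (fun k hk => ?_) fun t q ht hq =>
      factorization_fib_mul_fib_mul_fib_le_iff_of_even hq hd hv ht huv huw hvw hv2
  have hvk : Nat.fib (d * v) ∣ Nat.fib k := dvd_of_mul_left_dvd (dvd_of_mul_right_dvd hk)
  have hdvd {a : ℕ} : Nat.fib a ∣ Nat.fib k → a ∣ k :=
    dvd_of_fib_dvd_fib_of_even (hv2.mul_left d) hdv hvk
  exact mul_mul_dvd_of_coprime (huw.mul_left hvw) (mul_mul_dvd_of_coprime huv
    (hdvd (dvd_of_mul_right_dvd (dvd_of_mul_right_dvd hk))) (hdvd hvk))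
    (hdvd (dvd_of_mul_left_dvd hk))

lemma gcd_fib_two_mul_mul_fib_mul_of_odd (d : ℕ) {x v : ℕ} (hv : Odd v) (hxv : Nat.Coprime x v) :
    Nat.gcd (Nat.fib (2 * d * x)) (Nat.fib (d * v)) = Nat.fib d := by
  rw [mul_comm 2, mul_assoc]
  exact gcd_fib_mul_fib_mul_of_coprime d ((Nat.coprime_two_left.2 hv).mul_left hxv)

lemma not_dvd_fib_mul_of_odd {q d v : ℕ} (hv : Odd v) (hq2d : q ∣ Nat.fib (2 * d))
    (hqd : ¬ q ∣ Nat.fib d) : ¬ q ∣ Nat.fib (d * v) := by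
  rw [← gcd_fib_two_mul_mul_fib_mul_of_odd d hv (Nat.coprime_one_left v), mul_one] at hqd
  exact fun h => hqd (Nat.dvd_gcd hq2d h)

lemma gcd_lucas_dvd_fib_sq_mul_lucas (d v : ℕ) :
    Nat.gcd (lucas d) v ∣ Nat.fib d ^ 2 * lucas d :=
  (Nat.gcd_dvd_left _ _).trans (dvd_mul_left _ _)

lemma factorization_fib_sq_mul_lucas_div_gcd {d v : ℕ} (hd : d ≠ 0) (q : ℕ) :
    (Nat.fib d ^ 2 * lucas d / Nat.gcd (lucas d) v).factorization q =
      2 * (Nat.fib d).factorization q + (lucas d).factorization q -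
        (Nat.gcd (lucas d) v).factorization q := by
  rw [Nat.factorization_div (gcd_lucas_dvd_fib_sq_mul_lucas d v),
    Nat.factorization_mul (by simp [hd]) (lucas_pos d).ne', Nat.factorization_pow]
  rfl

lemma factorization_fib_mul_fib_mul_fib_le_iff_of_odd {q d u v w t : ℕ} (hq : q.Prime)
    (hd : d ≠ 0) (hu : u ≠ 0) (hw : w ≠ 0) (ht : t ≠ 0) (huv : Nat.Coprime u v)
    (huw : Nat.Coprime u w) (hvw : Nat.Coprime v w) (hv2 : Odd v) :
    (Nat.fib (2 * d * u) * Nat.fib (d * v) * Nat.fib (2 * d * w)).factorization q ≤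
        (Nat.fib (2 * d * (u * v * w) * t)).factorization q ↔
      (Nat.fib d ^ 2 * lucas d / Nat.gcd (lucas d) v).factorization q ≤ t.factorization q := by
  have hv : v ≠ 0 := hv2.pos.ne'
  have hd2 : 2 * d ≠ 0 := by simp [hd]
  have hf2d := factorization_fib_two_mul hd q
  rw [mul_assoc (2 * d), factorization_fib_sq_mul_lucas_div_gcd hd]
  by_cases hq2d : q ∣ Nat.fib (2 * d)
  · have hfac {j : ℕ} (hj : j ≠ 0) := factorization_fib_mul hq hq2d hd2 hj (.inl (even_two_mul d))
    have hfu := hfac hu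
    have hfw := hfac hw
    have hfk := hfac (j := u * v * w * t) (by simp [*])
    simp only [Nat.factorization_mul, ne_eq, mul_eq_zero, Nat.fib_eq_zero, Finsupp.add_apply,
      hd, hu, hv, hw, ht, OfNat.ofNat_ne_zero, or_self, not_false_eq_true] at hfk ⊢
    by_cases hqd : q ∣ Nat.fib d
    · have hfv := factorization_fib_mul hq hqd hd hv (.inr hv2)
      have hg : (Nat.gcd (lucas d) v).factorization q = 0 :=
        Nat.factorization_eq_zero_of_not_dvd fun h => hq.one_lt.ne' <|
          Nat.eq_one_of_dvd_coprimes (coprime_fib_gcd_lucas_of_odd d hv2) hqd h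
      omega
    · have hfd := Nat.factorization_eq_zero_of_not_dvd hqd
      have hfv : (Nat.fib (d * v)).factorization q = 0 :=
        Nat.factorization_eq_zero_of_not_dvd (not_dvd_fib_mul_of_odd hv2 hq2d hqd)
      have hg : (Nat.gcd (lucas d) v).factorization q =
          min ((lucas d).factorization q) (v.factorization q) :=
        DFunLike.congr_fun (Nat.factorization_gcd (lucas_pos d).ne' hv) q
      omega
  · have hqd : ¬ q ∣ Nat.fib d := fun h => hq2d (h.trans (Nat.fib_dvd _ _ (dvd_mul_left d 2)))
    rw [Nat.factorization_eq_zero_of_not_dvd hq2d] at hf2d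
    exact iff_of_true (factorization_mul_mul_le_of_not_dvd_gcd (by simp [hd, hu, hv, hw, ht])
      (Nat.fib_dvd _ _ (mul_dvd_mul_left (2 * d) ⟨v * w * t, by ring⟩))
      (Nat.fib_dvd _ _ ⟨2 * (u * w * t), by ring⟩)
      (Nat.fib_dvd _ _ (mul_dvd_mul_left (2 * d) ⟨u * v * t, by ring⟩))
      (by rwa [gcd_fib_two_mul_mul_fib_mul_of_odd d hv2 huv])
      (by rwa [gcd_fib_mul_fib_mul_of_coprime (2 * d) huw])
      (by rwa [Nat.gcd_comm, gcd_fib_two_mul_mul_fib_mul_of_odd d hv2 hvw.symm])) (by omega)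

theorem z_fib_mul_fib_mul_fib_of_odd {d u v w : ℕ} (hd : d ≠ 0) (hu : u ≠ 0) (hw : w ≠ 0)
    (huv : Nat.Coprime u v) (huw : Nat.Coprime u w) (hvw : Nat.Coprime v w)
    (hv2 : Odd v) (hdw : d * w ≠ 1) :
    z (Nat.fib (2 * d * u) * Nat.fib (d * v) * Nat.fib (2 * d * w)) =
      2 * d * (u * v * w) * (Nat.fib d ^ 2 * lucas d / Nat.gcd (lucas d) v) := by
  have hv : v ≠ 0 := hv2.pos.ne'
  have hL : lucas d ≠ 0 := (lucas_pos d).ne'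
  refine z_eq_mul_of_factorization_le_iff (by simp [*]) (by simp [*])
    ((Nat.div_ne_zero_iff_of_dvd (gcd_lucas_dvd_fib_sq_mul_lucas d v)).2 (by simp [*]))
    (fun k hk => ?_) fun t q ht hq =>
      factorization_fib_mul_fib_mul_fib_le_iff_of_odd hq hd hu hw ht huv huw hvw hv2
  have hwk : Nat.fib (2 * d * w) ∣ Nat.fib k := dvd_of_mul_left_dvd hk
  have hdvd {a : ℕ} : Nat.fib a ∣ Nat.fib k → a ∣ k :=
    dvd_of_fib_dvd_fib_of_even (mul_assoc 2 d w ▸ even_two_mul _) (by rw [mul_assoc]; omega) hwk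
  have hvk : d * v ∣ k := hdvd (dvd_of_mul_left_dvd (dvd_of_mul_right_dvd hk))
  have h2vk : 2 * d * v ∣ k := by
    rw [mul_comm 2, mul_assoc]
    exact mul_mul_dvd_of_coprime (Nat.coprime_two_left.2 hv2)
      (mul_comm 2 d ▸ dvd_of_mul_right_dvd (hdvd hwk)) hvk
  exact mul_mul_dvd_of_coprime (huw.mul_left hvw) (mul_mul_dvd_of_coprime huv
    (hdvd (dvd_of_mul_right_dvd (dvd_of_mul_right_dvd hk))) h2vk) (hdvd hwk)

theorem z_fib_progression_of_odd {d m r : ℕ} (hd : d ≠ 0) (hmr : Nat.Coprime m r) (hm : Odd m)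
    (hr : Odd r) (hdmr : d * (m + r) ≠ 2) :
    z (Nat.fib (d * m) * Nat.fib (d * (m + r)) * Nat.fib (d * (m + 2 * r))) =
      d * (m * (m + r) * (m + 2 * r)) * Nat.fib d ^ 2 := by
  have huw : Nat.Coprime m (m + 2 * r) := by
    rw [Nat.coprime_self_add_right]
    exact (Nat.coprime_two_right.2 hm).mul_right hmr
  have hvw : Nat.Coprime (m + r) (m + 2 * r) := by
    rw [two_mul, ← add_assoc]
    simpa using hmr
  exact z_fib_mul_fib_mul_fib_of_even hd (Nat.add_pos_left hm.pos r).ne' (by simpa using hmr) huw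
    hvw (hm.add_odd hr) hdmr

theorem z_fib_progression_of_even {d h r : ℕ} (hd : d ≠ 0) (hh : h ≠ 0) (hhr : Nat.Coprime h r)
    (hr : Odd r) :
    z (Nat.fib (2 * d * h) * Nat.fib (d * (2 * h + r)) * Nat.fib (2 * d * (h + r))) =
      2 * d * (h * (2 * h + r) * (h + r)) *
        (Nat.fib d ^ 2 * lucas d / Nat.gcd (lucas d) (2 * h + r)) := by
  have hvw : Nat.Coprime (2 * h + r) (h + r) := by
    rw [two_mul, add_assoc]
    simpa using hhr
  have hdw : d * (h + r) ≠ 1 := fun hone => by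
    have := Nat.eq_one_of_mul_eq_one_left hone
    have := hr.pos
    omega
  exact z_fib_mul_fib_mul_fib_of_odd hd hh (by omega) (by simpa using hhr) (by simpa using hhr) hvw
    ((even_two_mul h).add_odd hr) hdw

theorem z_fib_triple_general {n p : ℕ} (hn : 0 < n) (hp : Odd p) (hnp : 2 < n + p) :
    (Odd n →
      z (Nat.fib n * Nat.fib (n + p) * Nat.fib (n + 2 * p)) =
        (n * (n + p) * (n + 2 * p) / Nat.gcd n p ^ 2) * Nat.fib (Nat.gcd n p) ^ 2) ∧
    (Even n →
      z (Nat.fib n * Nat.fib (n + p) * Nat.fib (n + 2 * p)) =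
        (n * (n + p) * (n + 2 * p) / (2 * Nat.gcd n p ^ 2)) *
          (Nat.fib (Nat.gcd n p) ^ 2 * lucas (Nat.gcd n p) /
            Nat.gcd (lucas (Nat.gcd n p)) ((n + p) / Nat.gcd n p))) := by
  obtain ⟨m, r, hmr, hm, hr⟩ := Nat.exists_coprime n p
  have hd : 0 < Nat.gcd n p := Nat.gcd_pos_of_pos_left p hn
  generalize Nat.gcd n p = d at *
  subst hm hr
  have hr2 : Odd r := (Nat.odd_mul.1 hp).1
  refine ⟨fun hn2 => ?_, fun hn2 => ?_⟩
  · have hdmr : d * (m + r) ≠ 2 := by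
      rw [mul_comm, add_mul]
      exact hnp.ne'
    rw [show m * d * (m * d + r * d) * (m * d + 2 * (r * d)) =
        d ^ 2 * (d * (m * (m + r) * (m + 2 * r))) by ring,
      Nat.mul_div_cancel_left _ (pow_pos hd 2),
      ← z_fib_progression_of_odd hd.ne' hmr (Nat.odd_mul.1 hn2).1 hr2 hdmr]
    ring_nf
  · obtain ⟨h, rfl⟩ : 2 ∣ m :=
      ((Nat.even_mul.1 hn2).resolve_right (Nat.not_even_iff_odd.2 (Nat.odd_mul.1 hp).2)).two_dvd
    have hh : h ≠ 0 := by
      rintro rfl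
      simp at hn
    rw [show 2 * h * d * (2 * h * d + r * d) * (2 * h * d + 2 * (r * d)) =
        2 * d ^ 2 * (2 * d * (h * (2 * h + r) * (h + r))) by ring,
      Nat.mul_div_cancel_left _ (by positivity), ← add_mul, Nat.mul_div_cancel _ hd,
      ← z_fib_progression_of_even hd.ne' hh hmr.coprime_mul_left hr2]
    ring_nf

theorem z_fib_triple (n p : ℕ) (hn : 0 < n) (hp : p.Prime) (hp3 : 3 ≤ p) :
    (¬ p ∣ n → Odd n →
      z (Nat.fib n * Nat.fib (n + p) * Nat.fib (n + 2 * p)) =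
        n * (n + p) * (n + 2 * p)) ∧
    (¬ p ∣ n → Even n →
      z (Nat.fib n * Nat.fib (n + p) * Nat.fib (n + 2 * p)) =
        n * (n + p) * (n + 2 * p) / 2) ∧
    (p ∣ n → Odd n →
      z (Nat.fib n * Nat.fib (n + p) * Nat.fib (n + 2 * p)) =
        (n * (n + p) * (n + 2 * p) / p ^ 2) * Nat.fib p ^ 2) ∧
    (p ∣ n → Even n →
      z (Nat.fib n * Nat.fib (n + p) * Nat.fib (n + 2 * p)) =
        (n * (n + p) * (n + 2 * p) / (2 * p ^ 2)) *
          (Nat.fib p ^ 2 * lucas p / Nat.gcd (lucas p) ((n + p) / p))) := by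
  have general := z_fib_triple_general hn (hp.odd_of_ne_two (by omega)) (by omega)
  by_cases hpn : p ∣ n
  · simpa [hpn, Nat.gcd_eq_right hpn] using general
  · simpa [hpn, ((hp.coprime_iff_not_dvd).2 hpn).symm.gcd_eq_one, lucas] using general
end
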